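/- arXiv:0901.4827 — 3 statements merged into one kernel-verified Lean document; each statement's English description precedes it below -/
import Mathlib

section
/- Let R be a commutative ring and M a 2×2 matrix over R with det M = 1 and trace t := Tr(M). Then the characteristic polynomial of the Kronecker product M ⊗ M (a 4×4 matrix) equals (X - 1)² · (X² - (t² - 2)·X + 1). -/
open Polynomial Kronecker

/-!
Expanding `det (x - A ⊗ B)` blockwise, over the commutative ring generated by `B`, gives the
determinant of the homogenized characteristic polynomial of `A` evaluated at `(x, B)`. For
`A = B = M` of size `2`, with trace `t` and determinant `d`, this polynomial is
`x² - t x M + d M²`. By Cayley–Hamilton it equals `(x - d) ((x + d) - t M)`, whose determinant is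
again a homogenized characteristic polynomial of `M`.
-/

section BlockDeterminant

variable {R m n : Type*} [CommRing R] [Fintype m] [DecidableEq m] [Fintype n] [DecidableEq n]

theorem det_smul_one_sub_kronecker (x : R) (A : Matrix m m R) (B : Matrix n n R) :
    (x • 1 - A ⊗ₖ B).det = (aeval B (C x • 1 - (X : R[X]) • A.map C).det).det := by
  have blocks : ((C x • 1 - (X : R[X]) • A.map C).map (aeval B)).comp m m n n R =
      x • 1 - A ⊗ₖ B := by
    ext ⟨i, k⟩ ⟨j, l⟩
    by_cases h : i = j <;>
      simp [h, Matrix.one_apply, Matrix.algebraMap_matrix_apply, ← Algebra.smul_def]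
  rw [← blocks]
  exact (Matrix.det_det _ (aeval B : R[X] →ₐ[R] Matrix n n R).toRingHom).symm

theorem charpoly_kronecker_eq_det (A : Matrix m m R) (B : Matrix n n R) :
    (A ⊗ₖ B).charpoly = ((X : R[X]) • 1 - A.map C ⊗ₖ B.map C).det := by
  have map_kronecker : (A ⊗ₖ B).map C = A.map C ⊗ₖ B.map C := by
    ext
    simp
  rw [Matrix.charpoly, Matrix.charmatrix, RingHom.mapMatrix_apply, Matrix.scalar_apply,
    Matrix.smul_one_eq_diagonal, map_kronecker]

end BlockDeterminant

section FinTwo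

variable {R n : Type*} [CommRing R] [Fintype n] [DecidableEq n]

theorem det_smul_one_sub_smul_fin_two (x y : R) (M : Matrix (Fin 2) (Fin 2) R) :
    (x • 1 - y • M).det = x ^ 2 - x * y * M.trace + y ^ 2 * M.det := by
  simp only [Matrix.det_fin_two, Matrix.trace_fin_two, Matrix.sub_apply, Matrix.smul_apply,
    smul_eq_mul, Matrix.one_apply_eq, Matrix.one_apply_ne zero_ne_one,
    Matrix.one_apply_ne one_ne_zero]
  ring

theorem sq_fin_two_eq_trace_smul_sub_det_smul_one (M : Matrix (Fin 2) (Fin 2) R) :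
    M ^ 2 = M.trace • M - M.det • (1 : Matrix (Fin 2) (Fin 2) R) := by
  nontriviality R
  have cayley_hamilton := M.aeval_self_charpoly
  simp only [M.charpoly_fin_two, map_add, map_sub, map_mul, map_pow, aeval_X, aeval_C,
    Algebra.algebraMap_eq_smul_one, smul_mul_assoc, one_mul] at cayley_hamilton
  rw [← sub_eq_zero, ← cayley_hamilton]
  abel

theorem det_smul_one_sub_fin_two_kronecker (x : R) (A : Matrix (Fin 2) (Fin 2) R)
    (B : Matrix n n R) :
    (x • 1 - A ⊗ₖ B).det = (x ^ 2 • 1 - (A.trace * x) • B + A.det • B ^ 2).det := by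
  rw [det_smul_one_sub_kronecker, det_smul_one_sub_smul_fin_two,
    ← AddMonoidHom.map_trace, ← RingHom.mapMatrix_apply, ← RingHom.map_det]
  simp only [map_add, map_sub, map_mul, map_pow, aeval_C, aeval_X, Algebra.algebraMap_eq_smul_one,
    smul_mul_assoc, mul_smul_comm, mul_one, one_mul, _root_.smul_pow, one_pow, smul_smul]

theorem det_smul_one_sub_kronecker_self_fin_two (x : R) (M : Matrix (Fin 2) (Fin 2) R) :
    (x • 1 - M ⊗ₖ M).det =
      (x - M.det) ^ 2 * (x ^ 2 - (M.trace ^ 2 - 2 * M.det) * x + M.det ^ 2) := by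
  have factorization : x ^ 2 • 1 - (M.trace * x) • M + M.det • M ^ 2 =
      (x - M.det) • ((x + M.det) • 1 - M.trace • M) := by
    rw [sq_fin_two_eq_trace_smul_sub_det_smul_one]
    module
  rw [det_smul_one_sub_fin_two_kronecker, factorization, Matrix.det_smul, Fintype.card_fin,
    det_smul_one_sub_smul_fin_two]
  ring

theorem charpoly_kronecker_sl2_general (M : Matrix (Fin 2) (Fin 2) R) :
    (M ⊗ₖ M).charpoly =
      (X - C M.det) ^ 2 * (X ^ 2 - C (M.trace ^ 2 - 2 * M.det) * X + C (M.det ^ 2)) := by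
  rw [charpoly_kronecker_eq_det, det_smul_one_sub_kronecker_self_fin_two,
    ← AddMonoidHom.map_trace, ← RingHom.mapMatrix_apply, ← RingHom.map_det]
  simp only [map_sub, map_mul, map_pow, map_ofNat]

end FinTwo

/-- Characteristic polynomial of the Kronecker square of a `2 × 2` matrix of
determinant `1` and trace `t`. -/
theorem charpoly_kronecker_sl2 (R : Type*) [CommRing R]
    (M : Matrix (Fin 2) (Fin 2) R) (hdet : M.det = 1) :
    (M ⊗ₖ M).charpoly =
      (X - 1) ^ 2 * (X ^ 2 - C (M.trace ^ 2 - 2) * X + 1) := by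
  simpa only [hdet, map_one, mul_one, one_pow] using charpoly_kronecker_sl2_general M
end

section
/- Consider the integer quadratic form q(x,y) = 4x² + 16xy + 4y² (the quadratic form of the rank-2 even lattice with Gram matrix [[4,8],[8,4]]). Then: (i) for all integers x, y with (x,y) ≠ (0,0), q(x,y) ≠ 0; and (ii) for all integers x, y, q(x,y) ≠ -2. -/
/-!
Completing the square turns a zero `(x, y)` of `ax² + bxy + cy²` into
`(2ax + by)² = (b² - 4ac) y²`. If `y ≠ 0`, integral closedness makes `y` divide `2ax + by`, so the
discriminant is a square; here it is `192 = 8² · 3`. The value `-2` is excluded modulo `4`.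
-/

section BinaryQuadratic

variable {R : Type*} [CommRing R]

theorem sq_two_mul_add_eq_discrim_mul_sq {a b c x y : R}
    (h : a * x ^ 2 + b * x * y + c * y ^ 2 = 0) :
    (2 * a * x + b * y) ^ 2 = discrim a b c * y ^ 2 := by
  rw [discrim]
  linear_combination 4 * a * h

variable [IsDomain R] [IsIntegrallyClosed R]

theorem isSquare_of_sq_eq_mul_sq {d u v : R} (hv : v ≠ 0) (h : u ^ 2 = d * v ^ 2) :
    IsSquare d := by
  have v_dvd_u : v ∣ u :=
    (IsIntegrallyClosed.pow_dvd_pow_iff two_ne_zero).mp (Dvd.intro_left d h.symm)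
  obtain ⟨w, rfl⟩ := v_dvd_u
  have d_eq : d = w ^ 2 := mul_right_cancel₀ (pow_ne_zero 2 hv) (by rw [← h, mul_pow, mul_comm])
  exact d_eq ▸ IsSquare.sq w

theorem eq_zero_and_eq_zero_of_not_isSquare_discrim {a b c x y : R}
    (hd : ¬IsSquare (discrim a b c)) (h : a * x ^ 2 + b * x * y + c * y ^ 2 = 0) :
    x = 0 ∧ y = 0 := by
  have hy : y = 0 := by
    by_contra hy
    exact hd (isSquare_of_sq_eq_mul_sq hy (sq_two_mul_add_eq_discrim_mul_sq h))
  have ha : a ≠ 0 := by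
    rintro rfl
    exact hd ⟨b, by simp [discrim, sq]⟩
  have hx : a * x ^ 2 = 0 := by simpa [hy] using h
  exact ⟨by simpa [ha] using hx, hy⟩

end BinaryQuadratic

/-- The quadratic form `4x² + 16xy + 4y²` of the lattice with Gram matrix
`[[4,8],[8,4]]` represents neither `0` (nontrivially) nor `-2`. -/
theorem lattice_represents_neither_zero_nor_neg_two :
    (∀ x y : ℤ, (x, y) ≠ (0, 0) → 4 * x ^ 2 + 16 * x * y + 4 * y ^ 2 ≠ 0) ∧
      (∀ x y : ℤ, 4 * x ^ 2 + 16 * x * y + 4 * y ^ 2 ≠ -2) := by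
  refine ⟨fun x y hxy h => ?_, fun x y h => ?_⟩
  · have discrim_not_isSquare : ¬IsSquare (discrim (4 : ℤ) 16 4) := by norm_num [discrim]
    obtain ⟨rfl, rfl⟩ := eq_zero_and_eq_zero_of_not_isSquare_discrim discrim_not_isSquare h
    exact hxy rfl
  · have four_dvd : (4 : ℤ) ∣ 4 * x ^ 2 + 16 * x * y + 4 * y ^ 2 :=
      ⟨x ^ 2 + 4 * x * y + y ^ 2, by ring⟩
    have four_not_dvd : ¬(4 : ℤ) ∣ -2 := by decide
    exact four_not_dvd (h ▸ four_dvd)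
end

section
/- Let A = [[45,10,16],[-36,-7,-12],[-8,-2,-3]] regarded as a 3×3 real matrix. Then the set of real roots of the characteristic polynomial of A is exactly {1, 17 + 12√2, 17 - 12√2}; moreover (17+12√2)·(17-12√2) = 1 and 17 + 12√2 > 1 > 17 - 12√2 > 0. -/
open Matrix Polynomial

/-
`A` has determinant `1` and the same trace, `35`, as its inverse, so its characteristic polynomial
`X³ - 35 X² + 35 X - 1` is self-reciprocal of odd degree. Hence `1` is a root, and the other two
roots are inverse to each other with sum `34`: they are `17 ± 12√2`, coming from the solution
`17² - 2 · 12² = 1` of Pell's equation.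
-/

theorem charpoly_fin_three {R : Type*} [CommRing R] (M : Matrix (Fin 3) (Fin 3) R) :
    M.charpoly = X ^ 3 - C M.trace * X ^ 2 + C M.adjugate.trace * X - C M.det := by
  simp only [charpoly, det_fin_three, adjugate_fin_three, trace_fin_three, charmatrix_apply,
    diagonal_apply, of_apply, cons_val, Fin.reduceEq, if_true, if_false, C_sub, C_add, C_mul]
  ring

theorem charpoly_eq_of_trace_adjugate_eq_trace {R : Type*} [CommRing R]
    {M : Matrix (Fin 3) (Fin 3) R} {u v : R} (hdet : M.det = 1)
    (hadj : M.adjugate.trace = M.trace) (htrace : M.trace = 1 + (u + v)) (huv : u * v = 1) :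
    M.charpoly = (X - C 1) * ((X - C u) * (X - C v)) := by
  have hC : (C u * C v : R[X]) = 1 := by rw [← C_mul, huv, C_1]
  rw [charpoly_fin_three, hadj, htrace, hdet]
  simp only [C_add, C_1]
  linear_combination (1 - X) * hC

theorem add_mul_sqrt_mul_sub_mul_sqrt (a b : ℝ) {d : ℝ} (hd : 0 ≤ d) :
    (a + b * √d) * (a - b * √d) = a ^ 2 - d * b ^ 2 := by
  linear_combination -b ^ 2 * Real.sq_sqrt hd

/-- The real eigenvalues of `A = M₁M₂` are exactly `1`, `17 + 12√2` and
`17 - 12√2`, the latter two being inverse to each other. -/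
theorem beauville_product_real_eigenvalues
    (A : Matrix (Fin 3) (Fin 3) ℝ)
    (hA : A = !![45, 10, 16; -36, -7, -12; -8, -2, -3]) :
    {x : ℝ | A.charpoly.IsRoot x} =
        {1, 17 + 12 * Real.sqrt 2, 17 - 12 * Real.sqrt 2} ∧
      (17 + 12 * Real.sqrt 2) * (17 - 12 * Real.sqrt 2) = 1 ∧
      1 < 17 + 12 * Real.sqrt 2 ∧
      17 - 12 * Real.sqrt 2 < 1 ∧ 0 < 17 - 12 * Real.sqrt 2 := by
  have hdet : A.det = 1 := by
    simp only [hA, det_fin_three, of_apply, cons_val]; norm_num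
  have htrace : A.trace = 35 := by rw [hA, trace_fin_three_of]; norm_num
  have hadj : A.adjugate.trace = 35 := by
    rw [hA, adjugate_fin_three_of, trace_fin_three_of]; norm_num
  have hmul : (17 + 12 * √2) * (17 - 12 * √2) = 1 := by
    rw [add_mul_sqrt_mul_sub_mul_sqrt 17 12 zero_le_two]; norm_num
  have hcharpoly : A.charpoly =
      (X - C 1) * ((X - C (17 + 12 * √2)) * (X - C (17 - 12 * √2))) :=
    charpoly_eq_of_trace_adjugate_eq_trace hdet (hadj.trans htrace.symm) (by linarith) hmul
  have hone_lt : 1 < 17 + 12 * √2 := by linarith [Real.sqrt_nonneg 2]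
  have hinv : 17 - 12 * √2 = (17 + 12 * √2)⁻¹ := eq_inv_of_mul_eq_one_right hmul
  refine ⟨?_, hmul, hone_lt, hinv.trans_lt (inv_lt_one_of_one_lt₀ hone_lt), ?_⟩
  · ext x
    simp only [hcharpoly, root_mul, root_X_sub_C, Set.mem_ofPred_eq, Set.mem_insert_iff,
      Set.mem_singleton_iff, eq_comm]
  · rw [hinv]; positivity
end
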